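/- arXiv:2103.10038 — 2 statements merged into one kernel-verified Lean document; each statement's English description precedes it below -/
import Mathlib

section
/- Let W be a ℂ-vector space, let λ₁, …, λ_r be distinct nonzero complex numbers, let k₁, …, k_r be positive integers, and for 1 ≤ i ≤ r and 0 ≤ j ≤ k_i − 1 let A_{ij} : W → W((z₂)) be linear maps. Then Σ_{i=1}^r Σ_{j=0}^{k_i−1} A_{ij}(z₂) · (p(z₂)∂/∂z₂)^{(j)} [ p̄(λ_i^{−1}z₁) δ(λ_i z₂/z₁) ] = 0 (meaning: for every w ∈ W and every m ∈ ℤ, the z₁^m-coefficient, which is an element of W((z₂)), vanishes) if and only if A_{ij} = 0 for all i, j. -/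
/-!
Put `K = ℂ((z₂))` and let `D = p ∂`, a derivation of `K`. Up to the factor `1/j!`, the
`z₁^m`-coefficient of the `(i, j)`-th distribution is `D^j (yᵢ^m * p̄)` with `yᵢ = (λᵢ z₂)⁻¹`. By
the Leibniz rule `D (y^m * b) = y^m * (D b + m * (D y / y) * b)`, and `D` kills the integer `m`, so
`D^j (yᵢ^m * p̄) = yᵢ^m * Pᵢⱼ(m)` for a polynomial `Pᵢⱼ` over `K`; as `D yᵢ ≠ 0`, its degree is
exactly `j`. For `μ ≠ 0` the exponential polynomials `m ↦ μ^m * Q(m)` on `ℤ` are generalized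
eigenvectors of the shift with eigenvalue `μ`, so those with distinct bases are independent. Hence
the distributions are linearly independent over `K`, and pairing with `K`-linear functionals on
`W((z₂))` extracts the vectors `Aᵢⱼ(w)`.
-/

noncomputable section

open HahnSeries

/-- Formal derivative `d/dx` on `ℂ((x))`. -/
def lder (f : LaurentSeries ℂ) : LaurentSeries ℂ where
  coeff n := ((n + 1 : ℤ) : ℂ) * f.coeff (n + 1)
  isPWO_support' := by
    have hsub : (Function.support fun n : ℤ => ((n + 1 : ℤ) : ℂ) * f.coeff (n + 1)) ⊆
        (fun n : ℤ => n - 1) '' f.support := by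
      intro n hn
      refine ⟨n + 1, ?_, by ring⟩
      have : f.coeff (n + 1) ≠ 0 := by
        intro h
        apply hn
        simp [Function.mem_support, h]
      simpa [HahnSeries.mem_support] using this
    exact (f.isPWO_support.image_of_monotone (fun a b hab => by simpa using hab)).mono hsub

/-- The operator `p(x) d/dx` on `ℂ((x))`. -/
def pd (p : LaurentSeries ℂ) (f : LaurentSeries ℂ) : LaurentSeries ℂ := p * lder f

/-- The divided power `(p(x) d/dx)^{(k)} = (1/k!) (p(x)d/dx)^k`. -/
def pdPow (p : LaurentSeries ℂ) (k : ℕ) (f : LaurentSeries ℂ) : LaurentSeries ℂ :=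
  ((k.factorial : ℂ))⁻¹ • (pd p)^[k] f

/-- The residue of a formal Laurent series: the coefficient of `x⁻¹`. -/
def lres (f : LaurentSeries ℂ) : ℂ := f.coeff (-1)

/-- The variable `x` of `ℂ((x))`. -/
def lx : LaurentSeries ℂ := HahnSeries.single (1 : ℤ) (1 : ℂ)

/-- The coefficient of `z₁^m` in the formal distribution
`p̄(λ⁻¹z₁)δ(λz₂/z₁)` (where `p̄(x) = x⁻¹p(x)` and
`δ(λz₂/z₁) = Σ_{n∈ℤ} λⁿz₂ⁿz₁^{−n}`), as an element of `ℂ((z₂))`: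
it equals `λ^{−m}·z₂^{−m}·p̄(z₂)`. -/
def pbarDeltaCoeff (p : LaurentSeries ℂ) (lam : ℂ) (m : ℤ) : LaurentSeries ℂ :=
  lam ^ (-m) • (HahnSeries.single (-m) (1 : ℂ) * (HahnSeries.single (-1 : ℤ) (1 : ℂ) * p))

section ExponentialPolynomials

open Polynomial fwdDiff

variable {K : Type*} [Field K] {ι : Type*}

/-- The shift operator `f ↦ f(· + 1)` on sequences indexed by `ℤ`; its generalized eigenvectors
are the exponential polynomials. -/
def seqShift (R : Type*) [CommSemiring R] : Module.End R (ℤ → R) :=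
  LinearMap.funLeft R R (· + 1)

/-- The exponential polynomial `n ↦ μ ^ n * Q(n)` on `ℤ`, as a linear function of its polynomial
part `Q`. -/
def expPoly (μ : K) : K[X] →ₗ[K] ℤ → K :=
  LinearMap.pi fun n => μ ^ n • leval (n : K)

theorem expPoly_apply (μ : K) (Q : K[X]) (n : ℤ) : expPoly μ Q n = μ ^ n * Q.eval (n : K) := rfl

theorem expPoly_injective [CharZero K] {μ : K} (hμ : μ ≠ 0) : Function.Injective (expPoly μ) := by
  intro P Q h
  have hint : Set.range (Int.cast : ℤ → K) ⊆ {x | P.eval x = Q.eval x} := by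
    rintro _ ⟨n, rfl⟩
    exact mul_left_cancel₀ (zpow_ne_zero n hμ) (congrFun h n)
  exact eq_of_infinite_eval_eq P Q ((Set.infinite_range_of_injective Int.cast_injective).mono hint)

theorem seqShift_sub_pow_apply_zpow_mul {μ : K} (hμ : μ ≠ 0) (f : K → K) (k : ℕ) :
    ((seqShift K - μ • 1) ^ k) (fun n : ℤ => μ ^ n * f n) =
      fun n : ℤ => μ ^ (n + k) * (Δ_[1])^[k] f n := by
  induction k with
  | zero => simp
  | succ k ih =>
    ext n
    rw [pow_succ', Module.End.mul_apply, ih, Function.iterate_succ_apply']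
    simp only [seqShift, fwdDiff, LinearMap.sub_apply, LinearMap.smul_apply, Module.End.one_apply,
      LinearMap.funLeft_apply, Pi.sub_apply, Pi.smul_apply, smul_eq_mul, Nat.cast_succ,
      Int.cast_add, Int.cast_one, zpow_add₀ hμ, zpow_one]
    ring

theorem range_expPoly_le_maxGenEigenspace {μ : K} (hμ : μ ≠ 0) :
    LinearMap.range (expPoly μ) ≤ (seqShift K).maxGenEigenspace μ := by
  rintro _ ⟨Q, rfl⟩
  refine (Module.End.mem_maxGenEigenspace _ _ _).mpr ⟨Q.natDegree + 1, ?_⟩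
  refine (seqShift_sub_pow_apply_zpow_mul hμ Q.eval _).trans ?_
  ext n
  simp [fwdDiff_iter_degree_add_one_eq_zero]

theorem iSupIndep_range_expPoly {μ : ι → K} (hμ : ∀ i, μ i ≠ 0) (hinj : Function.Injective μ) :
    iSupIndep fun i => LinearMap.range (expPoly (μ i)) :=
  ((seqShift K).independent_maxGenEigenspace.comp hinj).mono
    fun i => range_expPoly_le_maxGenEigenspace (hμ i)

theorem linearIndependent_expPoly [CharZero K] {μ : ι → K} (hμ : ∀ i, μ i ≠ 0)
    (hinj : Function.Injective μ) {κ : ι → Type*} {P : ∀ i, κ i → K[X]}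
    (hP : ∀ i, LinearIndependent K (P i)) :
    LinearIndependent K fun ij : Σ i, κ i => expPoly (μ ij.1) (P ij.1 ij.2) := by
  have span_le (i : ι) : Submodule.span K (Set.range fun j => expPoly (μ i) (P i j)) ≤
      LinearMap.range (expPoly (μ i)) :=
    Submodule.span_le.mpr (Set.range_subset_iff.mpr fun j => ⟨P i j, rfl⟩)
  refine linearIndependent_iUnion_finite (f := fun i j => expPoly (μ i) (P i j)) (fun i => ?_)
    fun i t _ hi => ?_
  · exact (hP i).map' _ (LinearMap.ker_eq_bot.mpr (expPoly_injective (hμ i)))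
  · exact ((iSupIndep_range_expPoly hμ hinj).disjoint_biSup hi).mono (span_le i)
      (iSup₂_mono fun j _ => span_le j)

end ExponentialPolynomials

section IteratedDerivation

open Polynomial Differential

variable {K : Type*} [Field K] [Differential K]

/-- The polynomial part of `n ↦ D^j (y ^ n * a)` for the derivation `D` of `K`, an exponential
polynomial with base `y`; the first summand of the recursion applies `D` to the coefficients. -/
def iterDerivPoly (y a : K) : ℕ → K[X]
  | 0 => C a
  | j + 1 => mapCoeffs (iterDerivPoly y a j) + C (y′ / y) * (X * iterDerivPoly y a j)

theorem degree_mapCoeffs_le {A : Type*} [CommRing A] [Differential A] (P : A[X]) :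
    (mapCoeffs P).degree ≤ P.degree := by
  refine (degree_le_iff_coeff_zero _ _).mpr fun n hn => ?_
  rw [coeff_mapCoeffs, coeff_eq_zero_of_degree_lt hn, map_zero]

theorem deriv_eval_intCast {A : Type*} [CommRing A] [Differential A] (P : A[X]) (n : ℤ) :
    (P.eval (n : A))′ = (mapCoeffs P).eval (n : A) := by
  have h := deriv_aeval_eq (n : A) P
  rwa [Derivation.map_intCast, mul_zero, add_zero, coe_aeval_eq_eval] at h

theorem deriv_zpow_mul {y : K} (hy : y ≠ 0) (n : ℤ) (b : K) :
    (y ^ n * b)′ = y ^ n * (b′ + n * (y′ / y) * b) := by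
  rw [Derivation.leibniz, Derivation.leibniz_zpow, zpow_sub_one₀ hy]
  simp only [smul_eq_mul, zsmul_eq_mul]
  ring

theorem iterate_deriv_zpow_mul {y : K} (hy : y ≠ 0) (a : K) (j : ℕ) :
    (fun n : ℤ => Differential.deriv^[j] (y ^ n * a)) = expPoly y (iterDerivPoly y a j) := by
  ext n
  induction j with
  | zero => simp [iterDerivPoly, expPoly_apply]
  | succ j ih =>
    rw [Function.iterate_succ_apply', ih, expPoly_apply, deriv_zpow_mul hy, deriv_eval_intCast,
      expPoly_apply, iterDerivPoly]
    simp only [eval_add, eval_mul, eval_C, eval_X]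
    ring

theorem degree_iterDerivPoly {y a : K} (hy : y ≠ 0) (hy' : y′ ≠ 0) (ha : a ≠ 0) (j : ℕ) :
    (iterDerivPoly y a j).degree = j := by
  induction j with
  | zero => simpa [iterDerivPoly] using degree_C ha
  | succ j ih =>
    have hlead : (C (y′ / y) * (X * iterDerivPoly y a j)).degree = ((j + 1 : ℕ) : WithBot ℕ) := by
      rw [degree_C_mul (div_ne_zero hy' hy), degree_mul, degree_X, ih, add_comm, Nat.cast_succ]
    have hlower := degree_mapCoeffs_le (iterDerivPoly y a j)
    rw [ih] at hlower
    rw [iterDerivPoly, degree_add_eq_right_of_degree_lt, hlead]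
    rw [hlead]
    exact hlower.trans_lt (mod_cast j.lt_succ_self)

theorem linearIndependent_iterate_deriv_zpow_mul [CharZero K] {ι : Type*} {y a : ι → K}
    (hinj : Function.Injective y) (hy' : ∀ i, (y i)′ ≠ 0) (ha : ∀ i, a i ≠ 0) :
    LinearIndependent K fun (ij : Σ _ : ι, ℕ) (n : ℤ) =>
      Differential.deriv^[ij.2] (y ij.1 ^ n * a ij.1) := by
  have hy (i : ι) : y i ≠ 0 := fun h => hy' i (by rw [h, map_zero])
  let P (i : ι) : Sequence K :=
    ⟨iterDerivPoly (y i) (a i), degree_iterDerivPoly (hy i) (hy' i) (ha i)⟩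
  convert linearIndependent_expPoly hy hinj fun i => (P i).linearIndependent using 1
  exact funext fun ij => iterate_deriv_zpow_mul (hy ij.1) (a ij.1) ij.2

end IteratedDerivation

section LaurentSeries

theorem coeff_lx_mul_lder (f : LaurentSeries ℂ) (n : ℤ) :
    (lx * lder f).coeff n = n * f.coeff n := by
  simp [lx, lder, coeff_single_mul]

theorem support_lx_mul_lder_subset (f : LaurentSeries ℂ) : (lx * lder f).support ⊆ f.support := by
  intro n hn hf
  exact hn (by rw [coeff_lx_mul_lder, hf, mul_zero])

theorem lx_ne_zero : lx ≠ 0 := single_ne_zero one_ne_zero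

-- The Euler operator `x d/dx` does not move supports, so all three products below are sums over
-- the same antidiagonal.
theorem lder_mul (f g : LaurentSeries ℂ) : lder (f * g) = f * lder g + g * lder f := by
  refine mul_left_cancel₀ lx_ne_zero ?_
  suffices lx * lder (f * g) = f * (lx * lder g) + lx * lder f * g by rw [this]; ring
  ext n
  rw [coeff_lx_mul_lder, HahnSeries.coeff_add, coeff_mul,
    coeff_mul_right' g.isPWO_support (support_lx_mul_lder_subset g),
    coeff_mul_left' f.isPWO_support (support_lx_mul_lder_subset f),
    Finset.mul_sum, ← Finset.sum_add_distrib]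
  refine Finset.sum_congr rfl fun ij hij => ?_
  rw [coeff_lx_mul_lder, coeff_lx_mul_lder, ← (Finset.mem_antidiagonal.mp hij).2.2]
  push_cast
  ring

theorem lder_single (n : ℤ) (c : ℂ) : lder (single n c) = single (n - 1) (n * c) := by
  ext m
  rcases eq_or_ne m (n - 1) with rfl | hm
  · simp [lder]
  · have hm' : m + 1 ≠ n := fun h => hm (by rw [← h, add_sub_cancel_right])
    simp [lder, coeff_single_of_ne, hm, hm']

theorem pd_add (p f g : LaurentSeries ℂ) : pd p (f + g) = pd p f + pd p g := by
  rw [pd, pd, pd, ← mul_add]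
  congr 1
  ext n
  simp [lder, mul_add]

theorem pd_mul (p f g : LaurentSeries ℂ) : pd p (f * g) = f * pd p g + g * pd p f := by
  rw [pd, pd, pd, lder_mul]
  ring

theorem pd_single_ne_zero {p : LaurentSeries ℂ} (hp : p ≠ 0) {n : ℤ} (hn : n ≠ 0) {c : ℂ}
    (hc : c ≠ 0) : pd p (single n c) ≠ 0 := by
  rw [pd, lder_single]
  exact mul_ne_zero hp (single_ne_zero (mul_ne_zero (Int.cast_ne_zero.mpr hn) hc))

/-- The differential ring structure given by an additive map satisfying the Leibniz rule. -/
abbrev differentialOfLeibniz {A : Type*} [CommRing A] (D : A →+ A)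
    (h : ∀ a b, D (a * b) = a * D b + b * D a) : Differential A :=
  ⟨Derivation.mk' D.toIntLinearMap h⟩

/-- `ℂ((x))` as a differential field with derivation `p(x) d/dx`. -/
abbrev pdDifferential (p : LaurentSeries ℂ) : Differential (LaurentSeries ℂ) :=
  differentialOfLeibniz (AddMonoidHom.mk' (pd p) (pd_add p)) (pd_mul p)

theorem single_zpow {Γ F : Type*} [AddCommGroup Γ] [LinearOrder Γ] [IsOrderedAddMonoid Γ] [Field F]
    (a : Γ) (c : F) (n : ℤ) : single a c ^ n = single (n • a) (c ^ n) := by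
  cases n with
  | ofNat n => simp [single_pow]
  | negSucc n => rw [zpow_negSucc, single_pow, inv_single, zpow_negSucc, negSucc_zsmul]

theorem pbarDeltaCoeff_eq_zpow_mul (p : LaurentSeries ℂ) (c : ℂ) (m : ℤ) :
    pbarDeltaCoeff p c m = single (-1 : ℤ) c⁻¹ ^ m * (single (-1 : ℤ) (1 : ℂ) * p) := by
  rw [pbarDeltaCoeff, ← C_mul_eq_smul, ← mul_assoc, C_apply, single_mul_single, single_zpow,
    zero_add, mul_one, smul_eq_mul, mul_neg_one, inv_zpow']

theorem linearIndependent_pdPow_pbarDeltaCoeff {p : LaurentSeries ℂ} (hp : p ≠ 0) {ι : Type*}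
    {lam : ι → ℂ} (hne : ∀ i, lam i ≠ 0) (hinj : Function.Injective lam) :
    LinearIndependent (LaurentSeries ℂ) fun (ij : Σ _ : ι, ℕ) (m : ℤ) =>
      pdPow p ij.2 (pbarDeltaCoeff p (lam ij.1) m) := by
  have : CharZero (LaurentSeries ℂ) := charZero_of_injective_ringHom (C_injective (Γ := ℤ) (R := ℂ))
  let _ := pdDifferential p
  have hiter := linearIndependent_iterate_deriv_zpow_mul
    (y := fun i => single (-1 : ℤ) (lam i)⁻¹) (a := fun _ => single (-1 : ℤ) (1 : ℂ) * p)
    ((single_injective _).comp (inv_injective.comp hinj))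
    (fun i => pd_single_ne_zero hp (neg_ne_zero.mpr one_ne_zero) (inv_ne_zero (hne i)))
    (fun _ => mul_ne_zero (single_ne_zero one_ne_zero) hp)
  simp only [← pbarDeltaCoeff_eq_zpow_mul] at hiter
  let fact_inv (j : ℕ) : (LaurentSeries ℂ)ˣ :=
    (Units.mk0 (j.factorial : ℂ) (mod_cast j.factorial_ne_zero))⁻¹.map (C : ℂ →+* LaurentSeries ℂ)
  convert! hiter.units_smul fun ij => fact_inv ij.2 using 1
  ext ij m : 2
  exact C_mul_eq_smul.symm

end LaurentSeries

theorem eq_zero_of_forall_sum_smul_eq_zero {R V X κ : Type*} [CommRing R] [AddCommGroup V]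
    [Module R V] [Module.Projective R V] {e : κ → X → R} (he : LinearIndependent R e)
    {s : Finset κ} {v : κ → V} (h : ∀ x, ∑ k ∈ s, e k x • v k = 0) {k : κ} (hk : k ∈ s) :
    v k = 0 := by
  refine (Module.forall_dual_apply_eq_zero_iff R _).mp fun φ => ?_
  refine linearIndependent_iff'.mp he s (fun k => φ (v k)) (funext fun x => ?_) k hk
  simpa [mul_comm] using congrArg φ (h x)

theorem sum_delta_vanishes_iff_general (p : LaurentSeries ℂ) (hp : p ≠ 0)
    {V : Type*} [AddCommGroup V] [Module (LaurentSeries ℂ) V]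
    {ι : Type*} [Fintype ι] (lam : ι → ℂ) (hne : ∀ i, lam i ≠ 0) (hinj : Function.Injective lam)
    (k : ι → ℕ) (v : ι → ℕ → V) :
    (∀ m : ℤ, ∑ i, ∑ j ∈ Finset.range (k i), pdPow p j (pbarDeltaCoeff p (lam i) m) • v i j = 0)
      ↔ ∀ i, ∀ j < k i, v i j = 0 := by
  constructor
  · intro h i j hj
    simp only [Finset.sum_sigma'] at h
    exact eq_zero_of_forall_sum_smul_eq_zero (linearIndependent_pdPow_pbarDeltaCoeff hp hne hinj)
      (v := fun ij => v ij.1 ij.2) h (k := ⟨i, j⟩) (by simpa using hj)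
  · intro h m
    refine Finset.sum_eq_zero fun i _ => Finset.sum_eq_zero fun j hj => ?_
    rw [h i j (Finset.mem_range.mp hj), smul_zero]

/-- Lemma 2.3: for distinct nonzero `λ₁,…,λ_r`, positive integers
`k₁,…,k_r` and linear maps `A_{ij} : W → W((z₂))`, the distribution identity
`Σᵢ Σ_{j<kᵢ} A_{ij}(z₂)(p(z₂)∂/∂z₂)^{(j)} [p̄(λᵢ⁻¹z₁)δ(λᵢz₂/z₁)] = 0`
(meaning every `z₁^m`-coefficient applied to every `w ∈ W` vanishes in `W((z₂))`)
holds if and only if all `A_{ij} = 0`. -/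
theorem sum_delta_vanishes_iff (p : LaurentSeries ℂ) (hp : p ≠ 0)
    (W : Type*) [AddCommGroup W] [Module ℂ W]
    (r : ℕ) (lam : Fin r → ℂ) (hne : ∀ i, lam i ≠ 0) (hinj : Function.Injective lam)
    (k : Fin r → ℕ) (hk : ∀ i, 0 < k i)
    (A : Fin r → ℕ → (W →ₗ[ℂ] HahnModule ℤ ℂ W)) :
    (∀ (w : W) (m : ℤ),
        ∑ i : Fin r, ∑ j ∈ Finset.range (k i),
          pdPow p j (pbarDeltaCoeff p (lam i) m) • A i j w = 0)
      ↔ (∀ i : Fin r, ∀ j < k i, A i j = 0) := by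
  simp only [LinearMap.ext_iff, LinearMap.zero_apply,
    sum_delta_vanishes_iff_general p hp lam hne hinj k fun i j => A i j _]
  exact ⟨fun h i j hj w => h w i j hj, fun h w i j hj => h i j hj w⟩
end
end

section
/- Let f(x₁, x₂) ∈ ℂ[x₁, x₂] be a nonzero polynomial and write f(x₁, x₂) = (x₁ − x₂)^k f₀(x₁, x₂) where k ≥ 0 and f₀(x, x) ≠ 0 (k is the order of the zero of f along the diagonal x₁ = x₂). Then in the commutative ring ℂ((z))[[z₁, z₂]] one has f(φ(z, z₁), φ(z, z₂)) = (z₁ − z₂)^k · u for some invertible element u of ℂ((z))[[z₁, z₂]]. -/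
/-!
For every power series `φ(y) = Σ cₙ yⁿ` one has `φ(z₁) - φ(z₂) = (z₁ - z₂) v` with
`v = Σ c_{a+b+1} z₁ᵃ z₂ᵇ`, because `z₁ⁿ - z₂ⁿ = (z₁ - z₂) Σ_{a+b=n-1} z₁ᵃ z₂ᵇ`. The constant term
of `v` is `c₁`, and that of `f₀(φ(z₁), φ(z₂))` is `f₀(c₀, c₀)`. So over a field `v` is a unit as
soon as `c₁ ≠ 0`, and `f₀(φ(z₁), φ(z₂))` is one as soon as `f₀(x, x) ≠ 0` and `c₀` is
transcendental. For `φ = φ(z, ·)` these coefficients are `c₀ = z` and `c₁ = D(z) = p`.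
-/

noncomputable section

open HahnSeries

/-- `φ(z, z₁)` viewed in `ℂ((z))[[z₁, z₂]]`: the coefficient of the monomial
`z₁^k z₂^0` is `(1/k!) D^k(z)` with `D = p(z)d/dz`, and all monomials involving
`z₂` have zero coefficient. -/
def phiVar0 (p : LaurentSeries ℂ) : MvPowerSeries (Fin 2) (LaurentSeries ℂ) :=
  fun d => if d 1 = 0 then ((((d 0).factorial : ℂ))⁻¹ • (pd p)^[d 0] lx) else 0

/-- `φ(z, z₂)` viewed in `ℂ((z))[[z₁, z₂]]`. -/
def phiVar1 (p : LaurentSeries ℂ) : MvPowerSeries (Fin 2) (LaurentSeries ℂ) :=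
  fun d => if d 0 = 0 then ((((d 1).factorial : ℂ))⁻¹ • (pd p)^[d 1] lx) else 0

section DividedDifference

variable {A : Type*} [Semiring A]

/-- The divided difference `(φ(z₁) - φ(z₂)) / (z₁ - z₂)` of a power series `φ(y) = Σ cₙ yⁿ`, given
by its coefficients `c_{a+b+1}` at `z₁ᵃ z₂ᵇ`. -/
def dividedDifference (φ : PowerSeries A) : MvPowerSeries (Fin 2) A :=
  fun d => PowerSeries.coeff (d 0 + d 1 + 1) φ

lemma coeff_dividedDifference (φ : PowerSeries A) (d : Fin 2 →₀ ℕ) :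
    MvPowerSeries.coeff d (dividedDifference φ) = PowerSeries.coeff (d 0 + d 1 + 1) φ := rfl

lemma coeff_X_mul_dividedDifference (φ : PowerSeries A) (i : Fin 2) (d : Fin 2 →₀ ℕ) :
    MvPowerSeries.coeff d (MvPowerSeries.X i * dividedDifference φ) =
      if d i = 0 then 0 else PowerSeries.coeff (d 0 + d 1) φ := by
  rw [MvPowerSeries.X, MvPowerSeries.coeff_monomial_mul, one_mul, coeff_dividedDifference]
  simp only [Finsupp.single_le_iff, Finsupp.tsub_apply]
  by_cases hd : d i = 0
  · rw [if_neg (by lia), if_pos hd]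
  · have hdegree : d 0 - Finsupp.single i 1 0 + (d 1 - Finsupp.single i 1 1) + 1 = d 0 + d 1 := by
      simp only [Finsupp.single_apply]
      fin_cases i <;> grind
    rw [if_pos (by lia), if_neg hd, hdegree]

end DividedDifference

lemma isUnit_dividedDifference_iff {A : Type*} [Ring A] (φ : PowerSeries A) :
    IsUnit (dividedDifference φ) ↔ IsUnit (PowerSeries.coeff 1 φ) :=
  MvPowerSeries.isUnit_iff_constantCoeff

section Substitution

variable {A : Type*} [CommRing A]

lemma coeff_subst_X_zero (φ : PowerSeries A) (d : Fin 2 →₀ ℕ) :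
    MvPowerSeries.coeff d (φ.subst (MvPowerSeries.X 0 : MvPowerSeries (Fin 2) A)) =
      if d 1 = 0 then PowerSeries.coeff (d 0) φ else 0 := by
  simp [PowerSeries.coeff_subst_single, Finsupp.ext_iff, Fin.forall_fin_two]

lemma coeff_subst_X_one (φ : PowerSeries A) (d : Fin 2 →₀ ℕ) :
    MvPowerSeries.coeff d (φ.subst (MvPowerSeries.X 1 : MvPowerSeries (Fin 2) A)) =
      if d 0 = 0 then PowerSeries.coeff (d 1) φ else 0 := by
  simp [PowerSeries.coeff_subst_single, Finsupp.ext_iff, Fin.forall_fin_two]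

lemma subst_X_zero_sub_subst_X_one (φ : PowerSeries A) :
    φ.subst (MvPowerSeries.X 0 : MvPowerSeries (Fin 2) A) - φ.subst (MvPowerSeries.X 1) =
      (MvPowerSeries.X 0 - MvPowerSeries.X 1) * dividedDifference φ := by
  ext1 d
  rw [sub_mul, map_sub, map_sub, coeff_subst_X_zero, coeff_subst_X_one,
    coeff_X_mul_dividedDifference, coeff_X_mul_dividedDifference]
  by_cases h0 : d 0 = 0 <;> by_cases h1 : d 1 = 0 <;> simp [h0, h1]

lemma constantCoeff_subst_X {σ : Type*} (φ : PowerSeries A) (i : σ) :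
    MvPowerSeries.constantCoeff (φ.subst (MvPowerSeries.X i : MvPowerSeries σ A)) =
      PowerSeries.constantCoeff φ := by
  classical
  simp [← MvPowerSeries.coeff_zero_eq_constantCoeff_apply, PowerSeries.coeff_subst_single]

end Substitution

section ConstantTerm

variable {R A σ τ : Type*} [CommSemiring R] [CommSemiring A] [Algebra R A]

lemma constantCoeff_aeval (a : τ → MvPowerSeries σ A) (g : MvPolynomial τ R) :
    MvPowerSeries.constantCoeff (MvPolynomial.aeval a g) =
      MvPolynomial.aeval (fun i => MvPowerSeries.constantCoeff (a i)) g := by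
  have hcomp : MvPowerSeries.constantCoeff.comp (algebraMap R (MvPowerSeries σ A)) =
      algebraMap R A := by
    ext r
    simp [MvPowerSeries.algebraMap_apply]
  rw [MvPolynomial.map_aeval, hcomp, MvPolynomial.aeval_eq_eval₂Hom]

lemma aeval_const_eq_aeval_diagonal (t : A) (g : MvPolynomial σ R) :
    MvPolynomial.aeval (fun _ => t) g =
      Polynomial.aeval t (MvPolynomial.aeval (fun _ => (Polynomial.X : Polynomial R)) g) := by
  simp only [MvPolynomial.comp_aeval_apply, Polynomial.aeval_X]

end ConstantTerm

lemma isUnit_aeval_subst_X {R K σ : Type*} [CommRing R] [Field K] [Algebra R K] {φ : PowerSeries K}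
    (hφ : Transcendental R (PowerSeries.constantCoeff φ)) {g : MvPolynomial σ R}
    (hg : MvPolynomial.aeval (fun _ => (Polynomial.X : Polynomial R)) g ≠ 0) :
    IsUnit (MvPolynomial.aeval
      (fun i => φ.subst (MvPowerSeries.X i : MvPowerSeries σ K)) g) := by
  rw [MvPowerSeries.isUnit_iff_constantCoeff, constantCoeff_aeval, isUnit_iff_ne_zero]
  simp only [constantCoeff_subst_X]
  rw [aeval_const_eq_aeval_diagonal]
  exact fun h => hg (transcendental_iff.mp hφ _ h)

theorem poly_of_phi_factors_general {R K : Type*} [CommRing R] [Field K] [Algebra R K]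
    (φ : PowerSeries K) (hφ₀ : Transcendental R (PowerSeries.constantCoeff φ))
    (hφ₁ : PowerSeries.coeff 1 φ ≠ 0) (f f₀ : MvPolynomial (Fin 2) R) (k : ℕ)
    (hfact : f = (MvPolynomial.X 0 - MvPolynomial.X 1) ^ k * f₀)
    (hdiag : MvPolynomial.aeval (fun _ : Fin 2 => (Polynomial.X : Polynomial R)) f₀ ≠ 0) :
    ∃ u : MvPowerSeries (Fin 2) K, IsUnit u ∧
      MvPolynomial.aeval (fun i : Fin 2 => φ.subst (MvPowerSeries.X i : MvPowerSeries (Fin 2) K)) f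
        = (MvPowerSeries.X 0 - MvPowerSeries.X 1) ^ k * u := by
  have hquot : IsUnit (dividedDifference φ) := (isUnit_dividedDifference_iff φ).mpr hφ₁.isUnit
  refine ⟨dividedDifference φ ^ k * _, (hquot.pow k).mul (isUnit_aeval_subst_X hφ₀ hdiag), ?_⟩
  rw [hfact, map_mul, map_pow, map_sub, MvPolynomial.aeval_X, MvPolynomial.aeval_X,
    subst_X_zero_sub_subst_X_one, mul_pow, mul_assoc]

lemma aeval_lx (q : Polynomial ℂ) : Polynomial.aeval lx q = ofPowerSeries ℤ ℂ q := by
  induction q using Polynomial.induction_on' with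
  | add q r hq hr => rw [map_add, hq, hr, Polynomial.coe_add, map_add]
  | monomial n a =>
    rw [← Polynomial.C_mul_X_pow_eq_monomial]
    simp [lx, LaurentSeries.algebraMap_apply]

lemma transcendental_lx : Transcendental ℂ lx := by
  have haeval : ⇑(Polynomial.aeval (R := ℂ) lx) = ofPowerSeries ℤ ℂ ∘ (↑) := funext aeval_lx
  rw [transcendental_iff_injective, haeval]
  exact ofPowerSeries_injective.comp (Polynomial.coe_injective ℂ)

lemma lder_lx : lder lx = 1 := by
  ext n
  change ((n + 1 : ℤ) : ℂ) * lx.coeff (n + 1) = _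
  rcases eq_or_ne n 0 with rfl | hn <;> simp [lx, HahnSeries.coeff_one, *]

/-- The series `φ(z, y) ∈ ℂ((z))[[y]]`, of which `phiVar0` and `phiVar1` are the two copies in
`ℂ((z))[[z₁, z₂]]`. -/
def phiSeries (p : LaurentSeries ℂ) : PowerSeries (LaurentSeries ℂ) :=
  PowerSeries.mk fun n => pdPow p n lx

lemma constantCoeff_phiSeries (p : LaurentSeries ℂ) :
    PowerSeries.constantCoeff (phiSeries p) = lx := by
  simp [phiSeries, pdPow, ← PowerSeries.coeff_zero_eq_constantCoeff_apply]

lemma coeff_one_phiSeries (p : LaurentSeries ℂ) : PowerSeries.coeff 1 (phiSeries p) = p := by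
  simp [phiSeries, pdPow, pd, lder_lx]

lemma subst_X_zero_phiSeries (p : LaurentSeries ℂ) :
    (phiSeries p).subst (MvPowerSeries.X 0) = phiVar0 p := by
  ext1 d
  rw [coeff_subst_X_zero, phiSeries, PowerSeries.coeff_mk]
  rfl

lemma subst_X_one_phiSeries (p : LaurentSeries ℂ) :
    (phiSeries p).subst (MvPowerSeries.X 1) = phiVar1 p := by
  ext1 d
  rw [coeff_subst_X_one, phiSeries, PowerSeries.coeff_mk]
  rfl

lemma subst_X_phiSeries (p : LaurentSeries ℂ) (i : Fin 2) :
    (phiSeries p).subst (MvPowerSeries.X i) = if i = 0 then phiVar0 p else phiVar1 p := by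
  fin_cases i
  exacts [subst_X_zero_phiSeries p, subst_X_one_phiSeries p]

/-- if a nonzero polynomial `f(x₁,x₂)` is written as
`f = (x₁−x₂)^k f₀` with `f₀(x,x) ≠ 0`, then in `ℂ((z))[[z₁,z₂]]` one has
`f(φ(z,z₁), φ(z,z₂)) = (z₁ − z₂)^k · u` for some invertible `u`. -/
theorem poly_of_phi_factors (p : LaurentSeries ℂ) (hp : p ≠ 0)
    (f f₀ : MvPolynomial (Fin 2) ℂ) (k : ℕ) (hf : f ≠ 0)
    (hfact : f = (MvPolynomial.X 0 - MvPolynomial.X 1) ^ k * f₀)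
    (hdiag : MvPolynomial.aeval (fun _ : Fin 2 => (Polynomial.X : Polynomial ℂ)) f₀ ≠ 0) :
    ∃ u : MvPowerSeries (Fin 2) (LaurentSeries ℂ), IsUnit u ∧
      MvPolynomial.aeval (fun i : Fin 2 => if i = 0 then phiVar0 p else phiVar1 p) f
        = (MvPowerSeries.X 0 - MvPowerSeries.X 1) ^ k * u := by
  simpa only [subst_X_phiSeries] using poly_of_phi_factors_general (phiSeries p)
    (constantCoeff_phiSeries p ▸ transcendental_lx) ((coeff_one_phiSeries p).trans_ne hp)
    f f₀ k hfact hdiag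
end
end
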